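/- For every 1 ≤ i ≤ n, the greedy X-decomposition of d − q + q_{i+1} has digit c_j − 2 at each position 1 ≤ j ≤ i−1, digit c_i − 1 at position i, and digit 0 at every position beyond i; in particular d − q + q_{i+1} = Σ_{j=1}^{i−1} (c_j − 2)·q_j + (c_i − 1)·q_i. -/

import Mathlib

/-!
The greedy remainders of `k = q_0 - q_1 + q_{i+1}` have the closed form
`r_j = q_j - q_{j+1} + q_{i+1}` for `j < i`. Indeed, the recursion
`q_j = c_{j+1} q_{j+1} - q_{j+2}` rewrites this as
`(c_{j+1} - 2) q_{j+1} + (q_{j+1} - q_{j+2} + q_{i+1})`. If `j + 1 < i`, the bracket lies in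
`[0, q_{j+1})` because the `q_l` strictly decrease, so the digit at `j + 1` is `c_{j+1} - 2` and
the bracket is `r_{j+1}`. If `j + 1 = i`, the bracket is `q_i`, so the whole expression is
`(c_i - 1) q_i`: the digit at `i` is `c_i - 1`, and nothing remains, so that the later digits vanish
and the greedy expansion of `k` is exact.
-/

/-- The remainders of the greedy change-making algorithm for the coin system
`Q 0, Q 1, …`: `r_0 = k % Q 0` and `r_{i+1} = r_i % Q (i+1)`. -/
def hjRem (Q : ℕ → ℤ) (k : ℤ) : ℕ → ℤ
  | 0 => k % Q 0
  | i + 1 => hjRem Q k i % Q (i + 1)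

/-- The greedy digits for the coin system `Q 0, Q 1, …`:
`g_0 = ⌊k / Q 0⌋` and `g_{i+1} = ⌊r_i / Q (i+1)⌋`.  For `0 ≤ k < d = Q 0`
the digits at indices `1, …, n` form the greedy `X`-decomposition of `k`. -/
def hjGreedy (Q : ℕ → ℤ) (k : ℤ) : ℕ → ℤ
  | 0 => k / Q 0
  | i + 1 => hjRem Q k i / Q (i + 1)

section GreedyExpansion

variable {Q : ℕ → ℤ} {k : ℤ}

theorem sum_hjGreedy_mul_add_hjRem (Q : ℕ → ℤ) (k : ℤ) (n : ℕ) :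
    ∑ j ∈ Finset.Icc 1 n, hjGreedy Q k j * Q j + hjRem Q k n = hjRem Q k 0 := by
  induction n with
  | zero => simp
  | succ n ih =>
    rw [Finset.sum_Icc_succ_top n.succ_pos, add_assoc, ← ih, hjGreedy, hjRem,
      Int.ediv_mul_add_emod]

theorem hjGreedy_succ_eq_and_hjRem_succ_eq {j : ℕ} {g r : ℤ}
    (hrem : hjRem Q k j = g * Q (j + 1) + r) (hr : r ∈ Set.Ico 0 (Q (j + 1))) :
    hjGreedy Q k (j + 1) = g ∧ hjRem Q k (j + 1) = r := by
  rw [hjGreedy, hjRem, Int.ediv_emod_unique (hr.1.trans_lt hr.2)]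
  exact ⟨by linear_combination -hrem, hr⟩

theorem hjRem_eq_zero_of_le {i j : ℕ} (hi : hjRem Q k i = 0) (hij : i ≤ j) :
    hjRem Q k j = 0 := by
  induction j, hij using Nat.le_induction with
  | base => exact hi
  | succ j _ ih => rw [hjRem, ih, Int.zero_emod]

theorem hjGreedy_eq_zero_of_lt {i j : ℕ} (hi : hjRem Q k i = 0) (hij : i < j) :
    hjGreedy Q k j = 0 := by
  obtain ⟨j, rfl⟩ := Nat.exists_eq_add_one_of_ne_zero (Nat.ne_zero_of_lt hij)
  rw [hjGreedy, hjRem_eq_zero_of_le hi (Nat.le_of_lt_succ hij), Int.zero_ediv]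

end GreedyExpansion

/-- A Hirzebruch–Jung chain of length `n`: integers `q_0 > q_1 > ⋯ > q_{n+1} ≥ 0` linked by
`q_{j-1} = c_j q_j - q_{j+1}` for `1 ≤ j ≤ n`. The end values `q_n = 1` and `q_{n+1} = 0` of the
full expansion are not imposed, so that initial segments of a chain are chains. -/
structure IsHirzebruchJungChain (Q C : ℕ → ℤ) (n : ℕ) : Prop where
  succ_lt : ∀ j ≤ n, Q (j + 1) < Q j
  last_nonneg : 0 ≤ Q (n + 1)
  eq_mul_sub : ∀ j < n, Q j = C (j + 1) * Q (j + 1) - Q (j + 2)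

namespace IsHirzebruchJungChain

variable {Q C : ℕ → ℤ} {n i j : ℕ}

theorem strictAntiOn (h : IsHirzebruchJungChain Q C n) : StrictAntiOn Q (Set.Iic (n + 1)) :=
  strictAntiOn_Iic_of_succ_lt fun j hj => h.succ_lt j (Nat.le_of_lt_succ hj)

theorem nonneg (h : IsHirzebruchJungChain Q C n) (hj : j ≤ n + 1) : 0 ≤ Q j :=
  h.last_nonneg.trans (h.strictAntiOn.antitoneOn hj Set.self_mem_Iic hj)

theorem of_le (h : IsHirzebruchJungChain Q C n) (hin : i ≤ n) : IsHirzebruchJungChain Q C i where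
  succ_lt j hj := h.succ_lt j (hj.trans hin)
  last_nonneg := h.nonneg (Nat.succ_le_succ hin)
  eq_mul_sub j hj := h.eq_mul_sub j (hj.trans_le hin)

theorem sub_succ_add_eq (h : IsHirzebruchJungChain Q C n) (hj : j < n) (t : ℤ) :
    Q j - Q (j + 1) + t = (C (j + 1) - 2) * Q (j + 1) + (Q (j + 1) - Q (j + 2) + t) := by
  linear_combination h.eq_mul_sub j hj

theorem sub_succ_add_last_mem_Ico (h : IsHirzebruchJungChain Q C n) (hj : j < n) :
    Q j - Q (j + 1) + Q (n + 1) ∈ Set.Ico 0 (Q j) := by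
  have hdec : Q (j + 1) < Q j := h.succ_lt j hj.le
  have hlast : Q (n + 1) < Q (j + 1) :=
    h.strictAntiOn (Nat.succ_le_succ hj.le) Set.self_mem_Iic (Nat.succ_lt_succ hj)
  have hnonneg : 0 ≤ Q (n + 1) := h.last_nonneg
  constructor <;> linarith

theorem hjRem_eq (h : IsHirzebruchJungChain Q C n) (hj : j < n) :
    hjRem Q (Q 0 - Q 1 + Q (n + 1)) j = Q j - Q (j + 1) + Q (n + 1) := by
  induction j with
  | zero =>
    have hmem := h.sub_succ_add_last_mem_Ico hj
    exact Int.emod_eq_of_lt hmem.1 hmem.2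
  | succ j ih =>
    have hj' : j < n := Nat.lt_of_succ_lt hj
    exact (hjGreedy_succ_eq_and_hjRem_succ_eq ((ih hj').trans (h.sub_succ_add_eq hj' _))
      (h.sub_succ_add_last_mem_Ico hj)).2

theorem hjGreedy_eq_sub_two (h : IsHirzebruchJungChain Q C n) (hj : 1 ≤ j) (hjn : j < n) :
    hjGreedy Q (Q 0 - Q 1 + Q (n + 1)) j = C j - 2 := by
  obtain ⟨j, rfl⟩ := Nat.exists_eq_add_one.mpr hj
  have hj' : j < n := Nat.lt_of_succ_lt hjn
  exact (hjGreedy_succ_eq_and_hjRem_succ_eq ((h.hjRem_eq hj').trans (h.sub_succ_add_eq hj' _))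
    (h.sub_succ_add_last_mem_Ico hjn)).1

theorem hjGreedy_last_eq_and_hjRem_last_eq (h : IsHirzebruchJungChain Q C n) (hn : 1 ≤ n) :
    hjGreedy Q (Q 0 - Q 1 + Q (n + 1)) n = C n - 1 ∧
      hjRem Q (Q 0 - Q 1 + Q (n + 1)) n = 0 := by
  obtain ⟨m, rfl⟩ := Nat.exists_eq_add_one.mpr hn
  have hrem : hjRem Q (Q 0 - Q 1 + Q (m + 2)) m = (C (m + 1) - 1) * Q (m + 1) + 0 := by
    rw [h.hjRem_eq m.lt_succ_self]
    linear_combination h.eq_mul_sub m m.lt_succ_self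
  have hpos : 0 < Q (m + 1) := h.last_nonneg.trans_lt (h.succ_lt (m + 1) le_rfl)
  exact hjGreedy_succ_eq_and_hjRem_succ_eq hrem ⟨le_rfl, hpos⟩

theorem sub_add_last_eq_sum (h : IsHirzebruchJungChain Q C n) (hn : 1 ≤ n) :
    Q 0 - Q 1 + Q (n + 1) =
      (∑ j ∈ Finset.Icc 1 (n - 1), (C j - 2) * Q j) + (C n - 1) * Q n := by
  obtain ⟨hdigit, hrem⟩ := h.hjGreedy_last_eq_and_hjRem_last_eq hn
  have hexpand := sum_hjGreedy_mul_add_hjRem Q (Q 0 - Q 1 + Q (n + 1)) n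
  rw [h.hjRem_eq hn, hrem, add_zero] at hexpand
  obtain ⟨m, rfl⟩ := Nat.exists_eq_add_one.mpr hn
  rw [Finset.sum_Icc_succ_top hn, hdigit] at hexpand
  rw [← hexpand, Nat.add_sub_cancel]
  congr 1
  refine Finset.sum_congr rfl fun j hj => ?_
  obtain ⟨hj1, hjm⟩ := Finset.mem_Icc.mp hj
  rw [h.hjGreedy_eq_sub_two hj1 (Nat.lt_succ_of_le hjm)]

end IsHirzebruchJungChain

theorem greedy_decomposition_of_d_sub_q_add_general {Q C : ℕ → ℤ} {n : ℕ}
    (h : IsHirzebruchJungChain Q C n) (i : ℕ) (hi : 1 ≤ i) (hin : i ≤ n) :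
    (∀ j, 1 ≤ j → j + 1 ≤ i → hjGreedy Q (Q 0 - Q 1 + Q (i + 1)) j = C j - 2) ∧
    (hjGreedy Q (Q 0 - Q 1 + Q (i + 1)) i = C i - 1) ∧
    (∀ j, i < j → j ≤ n → hjGreedy Q (Q 0 - Q 1 + Q (i + 1)) j = 0) ∧
    (Q 0 - Q 1 + Q (i + 1)
      = (∑ j ∈ Finset.Icc 1 (i - 1), (C j - 2) * Q j) + (C i - 1) * Q i) := by
  have hchain : IsHirzebruchJungChain Q C i := h.of_le hin
  obtain ⟨hdigit, hrem⟩ := hchain.hjGreedy_last_eq_and_hjRem_last_eq hi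
  exact ⟨fun _ hj hji => hchain.hjGreedy_eq_sub_two hj hji, hdigit,
    fun _ hij _ => hjGreedy_eq_zero_of_lt hrem hij, hchain.sub_add_last_eq_sum hi⟩

/-- **Hirzebruch–Jung data** of `d/q` for coprime `d > q ≥ 1`:
`q_0 = d > q_1 = q > ⋯ > q_n = 1 > q_{n+1} = 0`, `c_i ≥ 2` with
`q_{i-1} = c_i q_i − q_{i+1}`.

**Statement:** for every `1 ≤ i ≤ n`, the greedy `X`-decomposition of
`d − q + q_{i+1}` has digit `c_j − 2` at each position `1 ≤ j ≤ i−1`, digit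
`c_i − 1` at position `i`, and digit `0` at every position beyond `i`; in
particular `d − q + q_{i+1} = Σ_{j=1}^{i−1} (c_j − 2)·q_j + (c_i − 1)·q_i`. -/
theorem greedy_decomposition_of_d_sub_q_add
    (n : ℕ) (d q : ℤ) (Q C : ℕ → ℤ)
    (hn : 1 ≤ n) (hq1 : 1 ≤ q) (hqd : q < d) (hcop : Int.gcd d q = 1)
    (hQ0 : Q 0 = d) (hQ1 : Q 1 = q) (hQn : Q n = 1) (hQtop : Q (n + 1) = 0)
    (hQdec : ∀ i, i ≤ n → Q (i + 1) < Q i)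
    (hC : ∀ i, 1 ≤ i → i ≤ n → Q (i - 1) = C i * Q i - Q (i + 1))
    (hC2 : ∀ i, 1 ≤ i → i ≤ n → 2 ≤ C i) :
    ∀ i, 1 ≤ i → i ≤ n →
      (∀ j, 1 ≤ j → j + 1 ≤ i → hjGreedy Q (d - q + Q (i + 1)) j = C j - 2) ∧
      (hjGreedy Q (d - q + Q (i + 1)) i = C i - 1) ∧
      (∀ j, i < j → j ≤ n → hjGreedy Q (d - q + Q (i + 1)) j = 0) ∧
      (d - q + Q (i + 1)
        = (∑ j ∈ Finset.Icc 1 (i - 1), (C j - 2) * Q j) + (C i - 1) * Q i) := by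
  subst hQ0 hQ1
  exact greedy_decomposition_of_d_sub_q_add_general
    ⟨hQdec, hQtop.ge, fun j hj => hC (j + 1) j.succ_pos hj⟩
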